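/- arXiv:2406.13528 — 2 statements merged into one kernel-verified Lean document; each statement's English description precedes it below -/
import Mathlib

section
/- Let A be a commutative ring and r, s ∈ A. With A_{L,ℓ} denoting the coefficient of z^ℓ in (z + s + r z^{−1})^L, for every integer L ≥ 1 and every integer ℓ one has L · A_{L−1,ℓ} = (ℓ+1) · A_{L,ℓ+1} + r · L · A_{L−1,ℓ+2}, where integer scalars act on A in the canonical way. -/
/-- `Acoef r s L ℓ` is the coefficient of `z^ℓ` in the Laurent polynomial
`(z + s + r·z⁻¹)^L`, computed as the coefficient of `z^(ℓ+L)` in `(z² + s·z + r)^L`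
(it vanishes when `ℓ + L < 0`). -/
noncomputable def Acoef {A : Type*} [CommRing A] (r s : A) (L : ℕ) (ℓ : ℤ) : A :=
  if 0 ≤ ℓ + L then
    ((Polynomial.X ^ 2 + Polynomial.C s * Polynomial.X + Polynomial.C r :
        Polynomial A) ^ L).coeff (ℓ + L).toNat
  else 0

/-!
Write `W = z + s + r·z⁻¹` in the ring of Laurent polynomials. The Euler operator `θ = z·d/dz`
multiplies the coefficient of `z^ℓ` by `ℓ` and is a derivation, so
`θ(W^L) = L·W^(L-1)·θ(W) = L·W^(L-1)·(z - r·z⁻¹)`. Comparing the coefficients of `z^(ℓ+1)` on both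
sides gives `(ℓ+1)·A_{L,ℓ+1} = L·(A_{L-1,ℓ} - r·A_{L-1,ℓ+2})`.
-/

section WeightDerivation

open AddMonoidAlgebra

variable {R M : Type*} [CommSemiring R] [AddCommMonoid M]

/-- The linear endomorphism of the monoid algebra `R[M]` that scales the monomial of exponent `m`
by the weight `φ m`. -/
noncomputable def weightScaling (φ : M →+ R) :
    AddMonoidAlgebra R M →ₗ[R] AddMonoidAlgebra R M where
  toFun f := ofCoeff (⇑φ • f.coeff)
  map_add' f g := by ext m; simp
  map_smul' c f := by ext m; simp [mul_left_comm]

theorem coeff_weightScaling (φ : M →+ R) (f : AddMonoidAlgebra R M) (m : M) :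
    (weightScaling φ f).coeff m = φ m * f.coeff m :=
  rfl

theorem weightScaling_single (φ : M →+ R) (m : M) (a : R) :
    weightScaling φ (single m a) = single m (φ m * a) := by
  ext k
  rcases eq_or_ne k m with rfl | h <;> simp [coeff_weightScaling, *]

theorem weightScaling_mul (φ : M →+ R) (f g : AddMonoidAlgebra R M) :
    weightScaling φ (f * g) = f * weightScaling φ g + g * weightScaling φ f := by
  induction f using induction_linear with
  | zero => simp
  | add f₁ f₂ h₁ h₂ => simp only [add_mul, mul_add, map_add, h₁, h₂, add_add_add_comm]
  | single m a =>
    induction g using induction_linear with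
    | zero => simp
    | add g₁ g₂ h₁ h₂ => simp only [add_mul, mul_add, map_add, h₁, h₂, add_add_add_comm]
    | single n b =>
      simp only [single_mul_single, weightScaling_single, map_add, add_comm n m, ← single_add]
      congr 1
      ring

/-- The derivation of the monoid algebra `R[M]` attached to the weight `φ`. For `M = ℤ` and `φ` the
canonical map `ℤ → R`, it is the Euler operator `z·d/dz` on Laurent polynomials. -/
noncomputable def weightDerivation (φ : M →+ R) :
    Derivation R (AddMonoidAlgebra R M) (AddMonoidAlgebra R M) where
  toLinearMap := weightScaling φ
  map_one_eq_zero' := by simp [one_def, weightScaling_single]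
  leibniz' := weightScaling_mul φ

theorem coeff_weightDerivation (φ : M →+ R) (f : AddMonoidAlgebra R M) (m : M) :
    (weightDerivation φ f).coeff m = φ m * f.coeff m :=
  rfl

theorem weightDerivation_single (φ : M →+ R) (m : M) (a : R) :
    weightDerivation φ (single m a) = single m (φ m * a) :=
  weightScaling_single φ m a

theorem weight_mul_coeff_pow (φ : M →+ R) (f : AddMonoidAlgebra R M) (n : ℕ) (m : M) :
    φ m * (f ^ n).coeff m = n • (f ^ (n - 1) * weightDerivation φ f).coeff m := by
  rw [← coeff_weightDerivation, Derivation.leibniz_pow, smul_eq_mul, coeff_smul_apply]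

end WeightDerivation

section Laurent

open LaurentPolynomial

theorem coeff_mul_T {R : Type*} [Semiring R] (f : R[T;T⁻¹]) (k ℓ : ℤ) :
    (f * T k).coeff ℓ = f.coeff (ℓ - k) := by
  rw [T, AddMonoidAlgebra.coeff_mul_single_apply, mul_one, sub_eq_add_neg]

theorem coeff_C_mul {R : Type*} [Semiring R] (a : R) (f : R[T;T⁻¹]) (ℓ : ℤ) :
    (C a * f).coeff ℓ = a * f.coeff ℓ :=
  AddMonoidAlgebra.coeff_single_zero_mul f a ℓ

theorem coeff_toLaurent_eq_ite {R : Type*} [Semiring R] (p : Polynomial R) (ℓ : ℤ) :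
    p.toLaurent.coeff ℓ = if 0 ≤ ℓ then p.coeff ℓ.toNat else 0 := by
  rw [LaurentPolynomial.coeff_toLaurent]
  split_ifs with h
  · lift ℓ to ℕ using h
    exact Finsupp.mapDomain_apply Nat.castEmbedding.injective _ _
  · refine Finsupp.mapDomain_of_notMem_range _ _ ?_
    rintro ⟨n, rfl⟩
    exact h n.cast_nonneg

theorem weightDerivation_C {R : Type*} [CommSemiring R] (φ : ℤ →+ R) (a : R) :
    weightDerivation φ (C a) = 0 :=
  (weightDerivation φ).map_algebraMap a

theorem weightDerivation_T {R : Type*} [CommSemiring R] (φ : ℤ →+ R) (k : ℤ) :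
    weightDerivation φ (T k) = C (φ k) * T k := by
  rw [T, weightDerivation_single, mul_one, single_eq_C_mul_T, T]

theorem toLaurent_quadratic_mul_T_neg_one {R : Type*} [Semiring R] (r s : R) :
    Polynomial.toLaurent (.X ^ 2 + .C s * .X + .C r) * T (-1) = T 1 + C s + C r * T (-1) := by
  simp only [map_add, map_mul, Polynomial.toLaurent_X_pow, Polynomial.toLaurent_C,
    Polynomial.toLaurent_X, add_mul, mul_assoc, ← T_add]
  norm_num

variable {A : Type*} [CommRing A] (r s : A)

theorem Acoef_eq_coeff_trinomial_pow (L : ℕ) (ℓ : ℤ) :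
    Acoef r s L ℓ = ((T 1 + C s + C r * T (-1)) ^ L : A[T;T⁻¹]).coeff ℓ := by
  rw [← toLaurent_quadratic_mul_T_neg_one, mul_pow, ← map_pow, T_pow, coeff_mul_T,
    coeff_toLaurent_eq_ite, Acoef]
  simp

theorem weightDerivation_trinomial :
    weightDerivation (Int.castAddHom A) (T 1 + C s + C r * T (-1)) = T 1 - C r * T (-1) := by
  simp only [map_add, Derivation.leibniz, weightDerivation_C, weightDerivation_T,
    Int.coe_castAddHom, Int.cast_one, map_neg, map_one, smul_eq_mul]
  ring

theorem intCast_mul_Acoef (L : ℕ) (ℓ : ℤ) :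
    (ℓ : A) * Acoef r s L ℓ =
      L * (Acoef r s (L - 1) (ℓ - 1) - r * Acoef r s (L - 1) (ℓ + 1)) := by
  simp only [Acoef_eq_coeff_trinomial_pow]
  set W : A[T;T⁻¹] := T 1 + C s + C r * T (-1)
  calc (ℓ : A) * (W ^ L).coeff ℓ
      = L • (W ^ (L - 1) * weightDerivation (Int.castAddHom A) W).coeff ℓ :=
        weight_mul_coeff_pow (Int.castAddHom A) W L ℓ
    _ = L • (W ^ (L - 1) * T 1 - C r * (W ^ (L - 1) * T (-1))).coeff ℓ := by
        rw [weightDerivation_trinomial, mul_sub, mul_left_comm]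
    _ = L * ((W ^ (L - 1)).coeff (ℓ - 1) - r * (W ^ (L - 1)).coeff (ℓ + 1)) := by
        rw [AddMonoidAlgebra.coeff_sub, Finsupp.sub_apply, coeff_C_mul, coeff_mul_T, coeff_mul_T,
          sub_neg_eq_add, nsmul_eq_mul]

end Laurent

/-- `L·A_{L−1,ℓ} = (ℓ+1)·A_{L,ℓ+1} + r·L·A_{L−1,ℓ+2}` for `L ≥ 1` and `ℓ : ℤ`,
where integer scalars act canonically. -/
theorem stmt_2 {A : Type*} [CommRing A] (r s : A) (L : ℕ) (hL : 1 ≤ L) (ℓ : ℤ) :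
    (L : ℤ) • Acoef r s (L - 1) ℓ =
      (ℓ + 1) • Acoef r s L (ℓ + 1) + r * ((L : ℤ) • Acoef r s (L - 1) (ℓ + 2)) := by
  have euler := intCast_mul_Acoef r s L (ℓ + 1)
  rw [add_sub_cancel_right, add_assoc, one_add_one_eq_two] at euler
  simp only [zsmul_eq_mul, Int.cast_natCast]
  linear_combination -euler
end

section
/- Let d be a nonnegative integer and let P ∈ ℚ[X] be a polynomial of degree at most 2d+1. In the field ℚ((t)) of formal Laurent series in t, set F := Σ_{n≥0} P(n) t^{n+1} and N := (t^{−1} − 1)^{2d+2} · F, and for each integer i let N_i denote the coefficient of t^{−i} in N (so N_i = 0 unless 0 ≤ i ≤ 2d+1). Then P is an odd polynomial (i.e. P(−X) = −P(X)) if and only if N is self-reciprocal of degree 2d, i.e. N_i = N_{2d−i} for every integer i (in particular N_{2d+1} = 0). -/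
/-!
On coefficients, multiplication by `t⁻¹ - 1` is the forward difference `Δ`. Extend `n ↦ P(n)` to
`p : ℤ → ℚ`, and let `f` be `p` cut off to `0` on the negative integers, so that `F = t ∑ f(k) tᵏ`.
Put `n = 2d + 2`. Reversing `k ↦ -k` commutes with `Δⁿ` up to a shift and the sign `(-1)ⁿ`, so the
symmetry of `N` says that `Δⁿ` kills `k ↦ f(k) - f(-k)`. It kills `p` as well, and both functions
agree for `k > 0`, hence everywhere. Since `f(k) - f(-k) = -p(-k)` for `k < 0`, this means that `p`
is odd.
-/

open scoped fwdDiff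

section ForwardDifference

variable {M N G : Type*} [AddCommGroup G]

lemma fwdDiff_iter_sub [AddCommMonoid M] (h : M) (f g : M → G) (n : ℕ) :
    (Δ_[h])^[n] (f - g) = (Δ_[h])^[n] f - (Δ_[h])^[n] g := by
  simpa only [fwdDiff_aux.coe_fwdDiffₗ_pow] using map_sub (fwdDiff_aux.fwdDiffₗ M G h ^ n) f g

lemma fwdDiff_iter_comp_addMonoidHom [AddCommMonoid M] [AddCommMonoid N] (φ : M →+ N) (h : M)
    (f : N → G) (n : ℕ) (y : M) :
    (Δ_[h])^[n] (fun x ↦ f (φ x)) y = (Δ_[φ h])^[n] f (φ y) := by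
  simp only [fwdDiff_iter_eq_sum_shift, map_add, map_nsmul]

lemma fwdDiff_iter_comp_neg [AddCommGroup M] (h : M) (f : M → G) (n : ℕ) (y : M) :
    (Δ_[h])^[n] (fun x ↦ f (-x)) y = (-1 : ℤ) ^ n • (Δ_[h])^[n] f (-y - n • h) := by
  induction n generalizing y with
  | zero => simp
  | succ n ih =>
    have hshift : -(y + h) - n • h = -y - (n + 1) • h := by rw [succ_nsmul]; abel
    have hstep : -y - n • h = -y - (n + 1) • h + h := by rw [succ_nsmul]; abel
    rw [Function.iterate_succ_apply', Function.iterate_succ_apply', fwdDiff, fwdDiff, ih, ih,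
      hshift, hstep, ← smul_sub, pow_succ, mul_neg_one, neg_smul, ← smul_neg, neg_sub]

lemma eq_of_fwdDiff_iter_eq_of_eqOn_Ici {u v : ℤ → G} {a : ℤ} (n : ℕ)
    (hΔ : (Δ_[1])^[n] u = (Δ_[1])^[n] v) (huv : Set.EqOn u v (Set.Ici a)) : u = v := by
  induction n generalizing u v with
  | zero => exact hΔ
  | succ n ih =>
    have hdiff : Δ_[1] u = Δ_[1] v := ih hΔ fun x (hx : a ≤ x) ↦ by
      rw [fwdDiff, fwdDiff, huv hx, huv (hx.trans (Int.le_add_one le_rfl))]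
    have hpred (x : ℤ) (hx : u (x + 1) = v (x + 1)) : u x = v x := by
      simpa [fwdDiff, hx] using congrFun hdiff x
    funext x
    obtain hx | hx := le_total a x
    · exact huv hx
    · induction x, hx using Int.leInductionDown with
      | base => exact huv Set.self_mem_Ici
      | pred x _ ih => exact hpred _ (by rwa [sub_add_cancel])

end ForwardDifference

section OddSequence

variable {A G : Type*} [AddCommGroup G] [IsAddTorsionFree G]

lemma odd_iff_indicator_Ici_sub_comp_neg_eq [AddCommGroup A] [LinearOrder A]
    [IsOrderedAddMonoid A] {p : A → G} :
    Function.Odd p ↔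
      ((Set.Ici 0).indicator p - fun k ↦ (Set.Ici 0).indicator p (-k)) = p := by
  constructor
  · intro hp
    funext k
    obtain hk | rfl | hk := lt_trichotomy k 0
    · simp [hk.not_ge, hk.le, hp.eq]
    · simp [hp.map_zero]
    · simp [hk.not_ge, hk.le]
  · intro h
    rw [← h]
    intro k
    simp

lemma odd_iff_fwdDiff_iter_indicator_Ici_eq {p : ℤ → G} {n : ℕ} (hp : (Δ_[1])^[n] p = 0) :
    Function.Odd p ↔ ∀ k : ℤ, (Δ_[1])^[n] ((Set.Ici 0).indicator p) k =
      (-1 : ℤ) ^ n • (Δ_[1])^[n] ((Set.Ici 0).indicator p) (-k - n) := by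
  set f := (Set.Ici 0).indicator p
  have heqOn : Set.EqOn (f - fun k ↦ f (-k)) p (Set.Ici 1) := fun k (hk : 1 ≤ k) ↦ by
    have hpos : 0 < k := hk
    simp [f, hpos.le, hpos.not_ge]
  calc Function.Odd p
    _ ↔ (f - fun k ↦ f (-k)) = p := odd_iff_indicator_Ici_sub_comp_neg_eq
    _ ↔ (Δ_[1])^[n] (f - fun k ↦ f (-k)) = 0 :=
      ⟨fun h ↦ by rw [h, hp], fun h ↦ eq_of_fwdDiff_iter_eq_of_eqOn_Ici n (h.trans hp.symm) heqOn⟩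
    _ ↔ ∀ k : ℤ, (Δ_[1])^[n] f k = (-1 : ℤ) ^ n • (Δ_[1])^[n] f (-k - n) := by
      simp [fwdDiff_iter_sub, sub_eq_zero, funext_iff, fwdDiff_iter_comp_neg]

end OddSequence

section LaurentSeries

variable {R : Type*}

lemma coeff_ofPowerSeries_mk [Semiring R] (p : ℤ → R) (k : ℤ) :
    (HahnSeries.ofPowerSeries ℤ R (PowerSeries.mk fun n : ℕ ↦ p n)).coeff k =
      (Set.Ici 0).indicator p k := by
  rw [PowerSeries.coeff_coe]
  obtain hk | hk := lt_or_ge k 0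
  · simp [hk, hk.not_ge]
  · simp [hk, hk.not_gt, abs_of_nonneg]

lemma coeff_single_neg_one_sub_one_pow_mul [Ring R] (F : LaurentSeries R) (n : ℕ) :
    ((HahnSeries.single (-1 : ℤ) (1 : R) - 1) ^ n * F).coeff = (Δ_[1])^[n] F.coeff := by
  induction n with
  | zero => simp
  | succ n ih =>
    rw [Function.iterate_succ_apply', ← ih, pow_succ', mul_assoc]
    funext k
    simp [fwdDiff, sub_mul, HahnSeries.coeff_single_mul]

lemma coeff_single_neg_one_sub_one_pow_mul_ofPowerSeries_X_mul_mk [CommRing R] (p : ℤ → R)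
    (n : ℕ) (k : ℤ) :
    ((HahnSeries.single (-1 : ℤ) (1 : R) - 1) ^ n * HahnSeries.ofPowerSeries ℤ R
      (PowerSeries.X * PowerSeries.mk fun m : ℕ ↦ p m)).coeff k =
      (Δ_[1])^[n] ((Set.Ici 0).indicator p) (k - 1) := by
  rw [map_mul, HahnSeries.ofPowerSeries_X, mul_left_comm, HahnSeries.coeff_single_mul, one_mul,
    coeff_single_neg_one_sub_one_pow_mul, funext (coeff_ofPowerSeries_mk p)]

end LaurentSeries

section Polynomial

open Polynomial

variable {R : Type*} [CommRing R] {P : R[X]}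

lemma fwdDiff_iter_eval_intCast_eq_zero_of_degree_lt {n : ℕ} (hP : P.degree < n) :
    (Δ_[1])^[n] (fun k : ℤ ↦ P.eval (k : R)) = 0 := by
  have heval : (Δ_[1])^[n] P.eval = 0 := by
    obtain rfl | hP0 := eq_or_ne P 0
    · funext x
      simp [fwdDiff_iter_eq_sum_shift]
    · exact fwdDiff_iter_eq_zero_of_degree_lt ((natDegree_lt_iff_degree_lt hP0).mpr hP)
  funext k
  simpa [heval] using fwdDiff_iter_comp_addMonoidHom (Int.castAddHom R) 1 P.eval n k

variable [IsAddTorsionFree R]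

lemma polynomial_eq_zero_of_forall_eval_natCast_eq_zero (h : ∀ n : ℕ, P.eval (n : R) = 0) :
    P = 0 := by
  have hΔ : (Δ_[1])^[P.natDegree] P.eval 0 = 0 := by simp [fwdDiff_iter_eq_sum_shift, h]
  rw [fwdDiff_iter_degree_eq_factorial] at hΔ
  have hsmul : P.natDegree.factorial • P.leadingCoeff = 0 := by
    simpa [nsmul_eq_mul, mul_comm] using hΔ
  exact leadingCoeff_eq_zero.mp
    ((smul_eq_zero_iff_right P.natDegree.factorial_ne_zero).mp hsmul)

lemma odd_eval_iff_odd_eval_intCast :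
    Function.Odd P.eval ↔ Function.Odd fun k : ℤ ↦ P.eval (k : R) := by
  refine ⟨fun hP k ↦ by simpa using hP k, fun hP x ↦ ?_⟩
  have hcomp : P.comp (-X) + P = 0 :=
    polynomial_eq_zero_of_forall_eval_natCast_eq_zero fun n ↦ by
      simpa [eq_neg_iff_add_eq_zero] using hP n
  simpa [eq_neg_iff_add_eq_zero] using congrArg (eval x) hcomp

end Polynomial

theorem stmt_5_general {R : Type*} [CommRing R] [IsAddTorsionFree R] (n : ℕ) (P : Polynomial R)
    (hP : P.degree < n) :
    let F : LaurentSeries R := HahnSeries.ofPowerSeries ℤ R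
      (PowerSeries.X * PowerSeries.mk fun m : ℕ ↦ P.eval (m : R))
    let N : LaurentSeries R := (HahnSeries.single (-1 : ℤ) (1 : R) - 1) ^ n * F
    (∀ x : R, P.eval (-x) = -P.eval x) ↔
      ∀ i : ℤ, N.coeff (-i) = (-1) ^ n * N.coeff (-((n : ℤ) - 2 - i)) := by
  intro F N
  let p : ℤ → R := fun k ↦ P.eval (k : R)
  let f : ℤ → R := (Set.Ici 0).indicator p
  have hN (k : ℤ) : N.coeff k = (Δ_[1])^[n] f (k - 1) := by
    simpa only [N, F, f, p, Int.cast_natCast] using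
      coeff_single_neg_one_sub_one_pow_mul_ofPowerSeries_X_mul_mk p n k
  calc (∀ x : R, P.eval (-x) = -P.eval x)
    _ ↔ Function.Odd p := odd_eval_iff_odd_eval_intCast
    _ ↔ ∀ k : ℤ, (Δ_[1])^[n] f k = (-1 : ℤ) ^ n • (Δ_[1])^[n] f (-k - n) :=
      odd_iff_fwdDiff_iter_indicator_Ici_eq (fwdDiff_iter_eval_intCast_eq_zero_of_degree_lt hP)
    _ ↔ ∀ i : ℤ, (Δ_[1])^[n] f (-i - 1) = (-1 : ℤ) ^ n • (Δ_[1])^[n] f (-(-i - 1) - n) :=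
      ((Equiv.neg ℤ).trans (Equiv.subRight 1)).surjective.forall
    _ ↔ ∀ i : ℤ, N.coeff (-i) = (-1) ^ n * N.coeff (-((n : ℤ) - 2 - i)) := by
      refine forall_congr' fun i ↦ ?_
      have hcenter : -(-i - 1) - (n : ℤ) = -((n : ℤ) - 2 - i) - 1 := by ring
      rw [hN, hN, hcenter, zsmul_eq_mul, Int.cast_pow, Int.cast_neg, Int.cast_one]

/-- with `t = z⁻¹`, let `F = Σ_{n≥0} P(n) t^{n+1} ∈ ℚ((t))`,
`N = (t⁻¹ − 1)^{2d+2} · F`, and `N_i` the coefficient of `t^{−i}` in `N`.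
If `deg P ≤ 2d+1`, then `P` is odd if and only if `N_i = N_{2d−i}` for all `i : ℤ`. -/
theorem stmt_5 (d : ℕ) (P : Polynomial ℚ) (hP : P.degree ≤ (2 * d + 1 : ℕ)) :
    let F : LaurentSeries ℚ := (HahnSeries.ofPowerSeries ℤ ℚ)
      ((PowerSeries.X : PowerSeries ℚ) * PowerSeries.mk (fun n => P.eval (n : ℚ)))
    let N : LaurentSeries ℚ := (HahnSeries.single (-1 : ℤ) (1 : ℚ) - 1) ^ (2 * d + 2) * F
    ((∀ x : ℚ, P.eval (-x) = - P.eval x) ↔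
      ∀ i : ℤ, N.coeff (-i) = N.coeff (-(2 * (d : ℤ) - i))) := by
  have hdeg : P.degree < (2 * d + 2 : ℕ) := hP.trans_lt (by exact_mod_cast Nat.lt_succ_self _)
  simpa [pow_add, pow_mul] using stmt_5_general (2 * d + 2) P hdeg
end
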